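/- For every n ≥ 2 and all 1 ≤ p < q ≤ n, the set E_{p,q} of edges of the associahedron graph K_n between the oriented classes Θ_{T_p} and Θ_{T_q} is a nonempty matching (no two of its edges share an endpoint), and its cardinality equals C_{p−1}·C_{q−p−1}·C_{n−q}, the number of vertices of the Cartesian product K_{p−1} □ K_{q−p−1} □ K_{n−q}. -/

import Mathlib

open Finset

/-- `x` lies strictly between `a` and `b` in cyclic (counterclockwise) order
on the vertices `0, 1, …, m-1` of a convex `m`-gon. -/
def CycBtw {m : ℕ} (a b x : Fin m) : Prop :=
  0 < (x - a).val ∧ (x - a).val < (b - a).val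

/-- `a` and `b` are adjacent (cyclically consecutive) vertices of the convex `m`-gon. -/
def PolyAdj {m : ℕ} (a b : Fin m) : Prop :=
  (b - a).val = 1 ∨ (a - b).val = 1

/-- `e` is a side of the convex `m`-gon. -/
def IsSide {m : ℕ} (e : Sym2 (Fin m)) : Prop :=
  ∃ a b : Fin m, e = s(a, b) ∧ PolyAdj a b

/-- `e` is a diagonal of the convex `m`-gon: a pair of distinct non-adjacent vertices. -/
def IsDiagonal {m : ℕ} (e : Sym2 (Fin m)) : Prop :=
  ¬ e.IsDiag ∧ ∀ a b : Fin m, e = s(a, b) → ¬ PolyAdj a b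

/-- Two chords cross iff exactly one endpoint of one lies strictly between the
endpoints of the other (for every representation of the endpoints). -/
def Crosses {m : ℕ} (e f : Sym2 (Fin m)) : Prop :=
  ∀ a b : Fin m, e = s(a, b) →
    ∃ c d : Fin m, f = s(c, d) ∧ Xor' (CycBtw a b c) (CycBtw a b d)

/-- A triangulation of the convex `(n+2)`-gon: a maximal set of pairwise
non-crossing diagonals. -/
def IsTriangulation (n : ℕ) (t : Finset (Sym2 (Fin (n + 2)))) : Prop :=
  (∀ e ∈ t, IsDiagonal e) ∧
  (∀ e ∈ t, ∀ f ∈ t, ¬ Crosses e f) ∧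
  (∀ e, IsDiagonal e → (∀ f ∈ t, ¬ Crosses e f) → e ∈ t)

/-- The type of triangulations of the convex `(n+2)`-gon. -/
def Triangulation (n : ℕ) : Type :=
  {t : Finset (Sym2 (Fin (n + 2))) // IsTriangulation n t}

instance (n : ℕ) : DecidableEq (Triangulation n) := fun a b =>
  decidable_of_iff (a.val = b.val) Subtype.ext_iff.symm

noncomputable instance (n : ℕ) : Fintype (Triangulation n) := by
  classical exact Subtype.fintype _

/-- The associahedron graph `K_n`: vertices are the triangulations of the convex
`(n+2)`-gon, with an edge between two triangulations iff they differ in exactly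
one diagonal (a flip). -/
def assocGraph (n : ℕ) : SimpleGraph (Triangulation n) where
  Adj s t := (s.val \ t.val).card = 1 ∧ (t.val \ s.val).card = 1
  symm := ⟨fun s t h => ⟨h.2, h.1⟩⟩
  loopless := ⟨fun s h => by simp at h⟩

/-- The set of edges of `G` with exactly one endpoint in `S`. -/
def edgeBoundary {V : Type*} (G : SimpleGraph V) (S : Set V) : Set (Sym2 V) :=
  {e | e ∈ G.edgeSet ∧ ∃ u v : V, e = s(u, v) ∧ u ∈ S ∧ v ∉ S}

/-- `e` is an edge of the triangulation `t`: a side of the polygon or one of the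
diagonals of `t`. -/
def EdgeOfT {n : ℕ} (t : Triangulation n) (e : Sym2 (Fin (n + 2))) : Prop :=
  IsSide e ∨ e ∈ t.val

/-- The triangle with vertices `a`, `b`, `c` is one of the `n` triangles of the
triangulation `t` (for pairwise non-crossing sets of diagonals this holds exactly
when all three chords are edges of `t`). -/
def IsTriangleOf {n : ℕ} (t : Triangulation n) (a b c : Fin (n + 2)) : Prop :=
  a ≠ b ∧ b ≠ c ∧ a ≠ c ∧ EdgeOfT t s(a, b) ∧ EdgeOfT t s(b, c) ∧ EdgeOfT t s(a, c)

open scoped Fin.NatCast in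
/-- The oriented class `Θ_{T_p}` (w.r.t. the special side `e* = {0, n+1}`): the set of
triangulations of the convex `(n+2)`-gon having the triangle `T_p = {0, p, n+1}` as one of
their triangles. -/
def orientedClass (n p : ℕ) : Set (Triangulation n) :=
  {t | IsTriangleOf t (0 : Fin (n + 2)) ((p : ℕ) : Fin (n + 2)) (((n + 1 : ℕ)) : Fin (n + 2))}

/-- The set `E_{p,q}` of edges of `K_n` with one endpoint in `Θ_{T_p}` and the other
in `Θ_{T_q}`. -/
def edgesBetween (n p q : ℕ) : Set (Sym2 (Triangulation n)) :=
  {e | e ∈ (assocGraph n).edgeSet ∧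
    ∃ u v : Triangulation n, e = s(u, v) ∧ u ∈ orientedClass n p ∧ v ∈ orientedClass n q}

/-- The boundary set `∂_{p,q}`: triangulations in `Θ_{T_p}` having a neighbor in
`Θ_{T_q}`. -/
def boundarySet (n p q : ℕ) : Set (Triangulation n) :=
  {t | t ∈ orientedClass n p ∧
    ∃ t' : Triangulation n, t' ∈ orientedClass n q ∧ (assocGraph n).Adj t t'}

/-!
Adjoin the sides of the polygon to each triangulation. A triangulation `u` in `Θ_{T_p}` has the
chord `{p, n+1}`, which crosses the chord `{0, q}` of any `v` in `Θ_{T_q}`; hence an edge from `u`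
to `v` can only be the flip of `{p, n+1}` to `{0, q}`, and each endpoint of the edge determines
the other. The flip exists exactly when `{p, q}` and `{q, n+1}` belong to `u`, that is, when `u`
consists of `{0, n+1}`, `{p, n+1}` and arbitrary triangulations of the three polygons on the vertex
intervals `[0, p]`, `[p, q]` and `[q, n+1]`. These are counted by Catalan numbers, the recurrence
coming from the apex of the triangle on the side `{a, b}` of the polygon with vertex interval
`[a, b]`.
-/

/-- The chord `e`, encoded by its two endpoints in increasing order, joins vertices of the convex
polygon with vertex set `[a, b]`. The sides of the polygon count as chords. -/
def IsChordIn {α : Type*} [LinearOrder α] (a b : α) (e : α × α) : Prop :=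
  a ≤ e.1 ∧ e.1 < e.2 ∧ e.2 ≤ b

/-- The crossing relation of chords encoded by increasing pairs: their endpoints interlace. -/
def ChordsCross {α : Type*} [LinearOrder α] (e f : α × α) : Prop :=
  (e.1 < f.1 ∧ f.1 < e.2 ∧ e.2 < f.2) ∨ (f.1 < e.1 ∧ e.1 < f.2 ∧ f.2 < e.2)

/-- A triangulation of the convex polygon with vertex set `[a, b]`, encoded as a maximal set of
pairwise non-crossing chords. It contains all the sides of the polygon, which makes a triangulation
of `[a, b]` with a triangle `{a, m, b}` the union of triangulations of `[a, m]` and `[m, b]` and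
the chord `(a, b)`. -/
structure IsChordTriangulation {α : Type*} [LinearOrder α] (a b : α) (t : Finset (α × α)) :
    Prop where
  isChordIn : ∀ e ∈ t, IsChordIn a b e
  not_chordsCross : ∀ e ∈ t, ∀ f ∈ t, ¬ ChordsCross e f
  mem_of_not_chordsCross : ∀ e, IsChordIn a b e → (∀ f ∈ t, ¬ ChordsCross e f) → e ∈ t

section Chords

variable {α : Type*} [LinearOrder α] {a b m p q : α} {e f : α × α} {s t u : Finset (α × α)}

instance (a b : α) : DecidablePred (IsChordIn a b) :=
  fun _ ↦ inferInstanceAs (Decidable (_ ∧ _))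

lemma chordsCross_comm : ChordsCross e f ↔ ChordsCross f e := or_comm

/-- The part of the set of chords `t` inside the polygon with vertex set `[a, b]`. -/
def chordsWithin (a b : α) (t : Finset (α × α)) : Finset (α × α) := t.filter (IsChordIn a b)

lemma mem_chordsWithin : e ∈ chordsWithin a b t ↔ e ∈ t ∧ IsChordIn a b e := mem_filter

/-- Adds the side `(a, b)` to sets of chords `s` and `t` of two polygons with vertex sets `[a, m]`
and `[m, b]`. -/
def glueChords (a b : α) (s t : Finset (α × α)) : Finset (α × α) := insert (a, b) (s ∪ t)

lemma mem_glueChords : e ∈ glueChords a b s t ↔ e = (a, b) ∨ e ∈ s ∨ e ∈ t := by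
  simp only [glueChords, mem_insert, mem_union]

namespace IsChordTriangulation

lemma base_mem (h : IsChordTriangulation a b t) (hab : a < b) : (a, b) ∈ t := by
  refine h.mem_of_not_chordsCross _ ⟨le_rfl, hab, le_rfl⟩ fun f hf ↦ ?_
  grind [h.isChordIn f hf, IsChordIn, ChordsCross]

lemma within (h : IsChordTriangulation a b t) (he : e ∈ t) :
    IsChordTriangulation e.1 e.2 (chordsWithin e.1 e.2 t) where
  isChordIn f hf := (mem_chordsWithin.1 hf).2
  not_chordsCross f hf g hg :=
    h.not_chordsCross f (mem_chordsWithin.1 hf).1 g (mem_chordsWithin.1 hg).1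
  mem_of_not_chordsCross f hf hcross := by
    have he' := h.isChordIn e he
    refine mem_chordsWithin.2 ⟨h.mem_of_not_chordsCross f ?_ fun g hg ↦ ?_, hf⟩
    · exact ⟨he'.1.trans hf.1, hf.2.1, hf.2.2.trans he'.2.2⟩
    · by_cases hge : IsChordIn e.1 e.2 g
      · exact hcross g (mem_chordsWithin.2 ⟨hg, hge⟩)
      · have := h.not_chordsCross e he g hg
        have := h.isChordIn g hg
        grind [IsChordIn, ChordsCross]

lemma glueChords_chordsWithin (h : IsChordTriangulation a b t) (ham : (a, m) ∈ t)
    (hmb : (m, b) ∈ t) :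
    glueChords a b (chordsWithin a m t) (chordsWithin m b t) = t := by
  have hlt := (h.isChordIn _ ham).2.1.trans (h.isChordIn _ hmb).2.1
  ext e
  simp only [mem_glueChords, mem_chordsWithin]
  refine ⟨?_, fun he ↦ ?_⟩
  · rintro (rfl | he | he)
    exacts [h.base_mem hlt, he.1, he.1]
  · have := h.isChordIn e he
    have := h.not_chordsCross _ ham e he
    have := h.not_chordsCross _ hmb e he
    grind [IsChordIn, ChordsCross]

lemma glue (hs : IsChordTriangulation a m s) (ht : IsChordTriangulation m b t)
    (ham : a < m) (hmb : m < b) : IsChordTriangulation a b (glueChords a b s t) where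
  isChordIn e he := by
    have := hs.isChordIn e
    have := ht.isChordIn e
    grind [mem_glueChords, IsChordIn]
  not_chordsCross e he f hf := by
    rw [mem_glueChords] at he hf
    have := hs.isChordIn e
    have := hs.isChordIn f
    have := ht.isChordIn e
    have := ht.isChordIn f
    have := hs.not_chordsCross e
    have := ht.not_chordsCross e
    grind [IsChordIn, ChordsCross]
  mem_of_not_chordsCross e he hcross := by
    simp only [mem_glueChords] at hcross ⊢
    by_cases hes : IsChordIn a m e
    · exact .inr (.inl (hs.mem_of_not_chordsCross e hes fun f hf ↦ hcross f (.inr (.inl hf))))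
    by_cases het : IsChordIn m b e
    · exact .inr (.inr (ht.mem_of_not_chordsCross e het fun f hf ↦ hcross f (.inr (.inr hf))))
    have := hcross _ (.inr (.inl (hs.base_mem ham)))
    have := hcross _ (.inr (.inr (ht.base_mem hmb)))
    grind [IsChordIn, ChordsCross]

lemma chordsWithin_glueChords_left (hs : IsChordTriangulation a m s)
    (ht : IsChordTriangulation m b t) (hmb : m < b) :
    chordsWithin a m (glueChords a b s t) = s := by
  ext e
  have := hs.isChordIn e
  have := ht.isChordIn e
  grind [mem_chordsWithin, mem_glueChords, IsChordIn]

lemma chordsWithin_glueChords_right (hs : IsChordTriangulation a m s)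
    (ht : IsChordTriangulation m b t) (ham : a < m) :
    chordsWithin m b (glueChords a b s t) = t := by
  ext e
  have := hs.isChordIn e
  have := ht.isChordIn e
  grind [mem_chordsWithin, mem_glueChords, IsChordIn]

lemma exists_lt_and_mem (h : IsChordTriangulation a b t) (ham : a < m) (hmb : m < b) :
    ∃ k, k < b ∧ (a, k) ∈ t := by
  -- With `k` the smallest left endpoint exceeding `a`, capped at `m`, no chord crosses `(a, k)`.
  obtain ⟨k, hk, hmin⟩ := exists_min_image (insert m ((t.image Prod.fst).filter (a < ·))) id
    (insert_nonempty _ _)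
  have hak : a < k := by grind
  have hkb : k < b := (hmin m (mem_insert_self _ _)).trans_lt hmb
  refine ⟨k, hkb, h.mem_of_not_chordsCross _ ⟨le_rfl, hak, hkb.le⟩ fun f hf ↦ ?_⟩
  have := h.isChordIn f hf
  have hle (haf : a < f.1) : k ≤ f.1 :=
    hmin _ (mem_insert_of_mem (mem_filter.2 ⟨mem_image_of_mem _ hf, haf⟩))
  grind [IsChordIn, ChordsCross]

lemma exists_apex (h : IsChordTriangulation a b t) (ham : a < m) (hmb : m < b) :
    ∃ k, (a, k) ∈ t ∧ (k, b) ∈ t := by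
  -- The apex is the far end of the longest chord at `a` other than `(a, b)`.
  obtain ⟨j, hjb, hj⟩ := h.exists_lt_and_mem ham hmb
  obtain ⟨e, he, hmax⟩ := exists_max_image (t.filter fun e ↦ e.1 = a ∧ e.2 < b) Prod.snd
    ⟨_, mem_filter.2 ⟨hj, rfl, hjb⟩⟩
  obtain ⟨het, rfl, heb⟩ := mem_filter.1 he
  have hlt := (h.isChordIn e het).2.1
  refine ⟨e.2, het, h.mem_of_not_chordsCross _ ⟨hlt.le, heb, le_rfl⟩ fun f hf ↦ ?_⟩
  have := h.isChordIn f hf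
  have := h.not_chordsCross e het f hf
  have hle (hfe : f.1 = e.1) (hfb : f.2 < b) : f.2 ≤ e.2 :=
    hmax f (mem_filter.2 ⟨hf, hfe, hfb⟩)
  grind [IsChordIn, ChordsCross]

lemma apex_unique (h : IsChordTriangulation a b t) (hap : (a, p) ∈ t) (hpb : (p, b) ∈ t)
    (haq : (a, q) ∈ t) (hqb : (q, b) ∈ t) : p = q := by
  have := h.not_chordsCross _ hpb _ haq
  have := h.not_chordsCross _ hap _ hqb
  have := h.isChordIn _ hap
  have := h.isChordIn _ hqb
  have := h.isChordIn _ haq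
  have := h.isChordIn _ hpb
  grind [IsChordIn, ChordsCross]

lemma flip (h : IsChordTriangulation a b t) (hap : (a, p) ∈ t) (hpb : (p, b) ∈ t)
    (hpq : (p, q) ∈ t) (hqb : (q, b) ∈ t) :
    IsChordTriangulation a b (insert (a, q) (t.erase (p, b))) where
  isChordIn e he := by
    have := h.isChordIn e
    have := h.isChordIn _ hap
    have := h.isChordIn _ hpq
    have := h.isChordIn _ hqb
    grind [IsChordIn]
  not_chordsCross e he f hf := by
    have hcross (g) (hg : g ∈ t) (hne : g ≠ (p, b)) : ¬ ChordsCross (a, q) g := by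
      have := h.isChordIn _ hpq
      have := h.isChordIn g hg
      have := h.not_chordsCross _ hap g hg
      have := h.not_chordsCross _ hpb g hg
      have := h.not_chordsCross _ hpq g hg
      have := h.not_chordsCross _ hqb g hg
      grind [IsChordIn, ChordsCross]
    have := h.not_chordsCross e
    grind [chordsCross_comm, ChordsCross]
  mem_of_not_chordsCross e he hcross := by
    have hap' := h.isChordIn _ hap
    have hpq' := h.isChordIn _ hpq
    have hqb' := h.isChordIn _ hqb
    have hcross_t (f) (hf : f ∈ t) (hne : f ≠ (p, b)) : ¬ ChordsCross e f :=
      hcross f (mem_insert_of_mem (mem_erase.2 ⟨hne, hf⟩))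
    by_cases hpb_cross : ChordsCross e (p, b)
    · have := hcross_t _ hap
      have := hcross_t _ hpq
      have := hcross_t _ hqb
      grind [IsChordIn, ChordsCross]
    · have het : e ∈ t := h.mem_of_not_chordsCross e he fun f hf ↦ by
        by_cases hne : f = (p, b)
        exacts [hne ▸ hpb_cross, hcross_t f hf hne]
      have := hcross (a, q) (mem_insert_self _ _)
      grind [IsChordIn, ChordsCross]

lemma insert_erase_iff (h : IsChordTriangulation a b t) (hap : (a, p) ∈ t) (hpb : (p, b) ∈ t)
    (hpq : p < q) (hqb : q < b) :
    IsChordTriangulation a b (insert (a, q) (t.erase (p, b))) ↔ (p, q) ∈ t ∧ (q, b) ∈ t := by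
  refine ⟨fun hflip ↦ ?_, fun ⟨hpq', hqb'⟩ ↦ h.flip hap hpb hpq' hqb'⟩
  have := h.isChordIn _ hap
  have haq : (a, q) ∈ insert (a, q) (t.erase (p, b)) := mem_insert_self _ _
  have hcross (f) (hf : f ∈ t) : ¬ ChordsCross (p, q) f ∧ ¬ ChordsCross (q, b) f := by
    have := h.isChordIn f hf
    have := h.not_chordsCross _ hap f hf
    have := h.not_chordsCross _ hpb f hf
    have := hflip.not_chordsCross _ haq f
    grind [IsChordIn, ChordsCross]
  exact ⟨h.mem_of_not_chordsCross _ ⟨this.2.1.le, hpq, hqb.le⟩ fun f hf ↦ (hcross f hf).1,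
    h.mem_of_not_chordsCross _ ⟨(this.2.1.trans hpq).le, hqb, le_rfl⟩ fun f hf ↦ (hcross f hf).2⟩

end IsChordTriangulation

section Catalan

variable [LocallyFiniteOrder α]

lemma card_Ioo_add_card_Ioo_add_one (ham : a < m) (hmb : m < b) :
    #(Ioo a m) + #(Ioo m b) + 1 = #(Ioo a b) := by
  have hdisj : Disjoint (Ioo a m) (Ioo m b) :=
    disjoint_left.2 fun x hx hx' ↦ (mem_Ioo.1 hx).2.not_gt (mem_Ioo.1 hx').1
  have hm : m ∉ (Ioo a m).disjUnion (Ioo m b) hdisj := by simp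
  rw [← card_disjUnion _ _ hdisj, ← card_cons hm]
  congr 1
  ext x
  grind

lemma sum_Ioo_eq_sum_antidiagonal {M : Type*} [AddCommMonoid M] {k : ℕ} (hk : #(Ioo a b) = k + 1)
    (f : ℕ → ℕ → M) :
    ∑ m ∈ Ioo a b, f #(Ioo a m) #(Ioo m b) = ∑ ij ∈ antidiagonal k, f ij.1 ij.2 := by
  have hmaps : Set.MapsTo (fun m ↦ (#(Ioo a m), #(Ioo m b))) (Ioo a b) (antidiagonal k) := by
    intro m hm
    obtain ⟨ham, hmb⟩ := mem_Ioo.1 hm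
    have := card_Ioo_add_card_Ioo_add_one ham hmb
    exact mem_coe.2 (mem_antidiagonal.2 (by dsimp only; omega))
  have hinj : Set.InjOn (fun m ↦ (#(Ioo a m), #(Ioo m b))) (Ioo a b) := by
    have hmono : StrictMonoOn (fun m ↦ #(Ioo a m)) (Ioo a b) := fun m hm m' _ hlt ↦ by
      have := card_Ioo_add_card_Ioo_add_one (mem_Ioo.1 hm).1 hlt
      grind
    exact fun m hm m' hm' heq ↦ hmono.injOn hm hm' (congrArg Prod.fst heq)
  exact sum_nbij _ hmaps hinj
    (surjOn_of_injOn_of_card_le _ hmaps hinj (by rw [Nat.card_antidiagonal, hk])) fun _ _ ↦ rfl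

open Classical in
/-- The triangulations of the convex polygon with vertex set `[a, b]`. -/
noncomputable def chordTriangulations (a b : α) : Finset (Finset (α × α)) :=
  (Icc a b ×ˢ Icc a b).powerset.filter (IsChordTriangulation a b)

lemma mem_chordTriangulations : t ∈ chordTriangulations a b ↔ IsChordTriangulation a b t := by
  simp only [chordTriangulations, mem_filter, mem_powerset, and_iff_right_iff_imp]
  intro h e he
  obtain ⟨hae, hlt, heb⟩ := h.isChordIn e he
  exact mem_product.2 ⟨mem_Icc.2 ⟨hae, hlt.le.trans heb⟩, mem_Icc.2 ⟨hae.trans hlt.le, heb⟩⟩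

lemma card_chordTriangulations_apex_and_mem (ham : a < m) (hmb : m < b)
    {S : Finset (Finset (α × α))} (hS : S ⊆ chordTriangulations m b) :
    #{t ∈ chordTriangulations a b | ((a, m) ∈ t ∧ (m, b) ∈ t) ∧ chordsWithin m b t ∈ S} =
      #(chordTriangulations a m) * #S := by
  rw [← card_product]
  refine card_nbij' (fun t ↦ (chordsWithin a m t, chordsWithin m b t))
    (fun st ↦ glueChords a b st.1 st.2) ?_ ?_ ?_ ?_
  · intro t ht
    simp only [mem_coe, mem_filter, mem_product, mem_chordTriangulations] at ht ⊢
    exact ⟨ht.1.within ht.2.1.1, ht.2.2⟩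
  · rintro ⟨s, t⟩ hst
    simp only [mem_coe, mem_filter, mem_product, mem_chordTriangulations] at hst ⊢
    have ht := mem_chordTriangulations.1 (hS hst.2)
    refine ⟨hst.1.glue ht ham hmb, ⟨?_, ?_⟩, ?_⟩
    · exact mem_glueChords.2 (.inr (.inl (hst.1.base_mem ham)))
    · exact mem_glueChords.2 (.inr (.inr (ht.base_mem hmb)))
    · rw [hst.1.chordsWithin_glueChords_right ht ham]
      exact hst.2
  · intro t ht
    simp only [mem_coe, mem_filter, mem_chordTriangulations] at ht
    exact ht.1.glueChords_chordsWithin ht.2.1.1 ht.2.1.2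
  · rintro ⟨s, t⟩ hst
    simp only [mem_coe, mem_product, mem_chordTriangulations] at hst
    have ht := mem_chordTriangulations.1 (hS hst.2)
    exact Prod.ext (hst.1.chordsWithin_glueChords_left ht hmb)
      (hst.1.chordsWithin_glueChords_right ht ham)

lemma card_chordTriangulations_apex (ham : a < m) (hmb : m < b) :
    #{t ∈ chordTriangulations a b | (a, m) ∈ t ∧ (m, b) ∈ t} =
      #(chordTriangulations a m) * #(chordTriangulations m b) := by
  rw [← card_chordTriangulations_apex_and_mem ham hmb subset_rfl]
  refine congrArg card (filter_congr fun t ht ↦ (and_iff_left_of_imp fun h ↦ ?_).symm)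
  exact mem_chordTriangulations.2 ((mem_chordTriangulations.1 ht).within h.2)

lemma card_chordTriangulations_two_apexes (hap : a < p) (hpq : p < q) (hqb : q < b) :
    #{t ∈ chordTriangulations a b | ((a, p) ∈ t ∧ (p, b) ∈ t) ∧ (p, q) ∈ t ∧ (q, b) ∈ t} =
      #(chordTriangulations a p) * #(chordTriangulations p q) * #(chordTriangulations q b) := by
  rw [mul_assoc, ← card_chordTriangulations_apex hpq hqb,
    ← card_chordTriangulations_apex_and_mem hap (hpq.trans hqb) (filter_subset _ _)]
  refine congrArg card (filter_congr fun t ht ↦ and_congr_right fun h ↦ ?_)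
  have hwithin := (mem_chordTriangulations.1 ht).within h.2
  simp only [mem_filter, mem_chordTriangulations, mem_chordsWithin, IsChordIn]
  grind

lemma chordTriangulations_of_covBy (hab : a ⋖ b) : chordTriangulations a b = {{(a, b)}} := by
  have hchord (e) : IsChordIn a b e ↔ e = (a, b) := by
    have := hab.lt
    have := hab.2 (c := e.1)
    have := hab.2 (c := e.2)
    grind [IsChordIn]
  ext t
  rw [mem_chordTriangulations, mem_singleton]
  constructor
  · exact fun h ↦ eq_singleton_iff_unique_mem.2
      ⟨h.base_mem hab.lt, fun e he ↦ (hchord e).1 (h.isChordIn e he)⟩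
  · rintro rfl
    refine ⟨fun e he ↦ (hchord e).2 (mem_singleton.1 he), ?_,
      fun e he _ ↦ mem_singleton.2 ((hchord e).1 he)⟩
    simp [ChordsCross]

lemma card_chordTriangulations (hab : a < b) :
    #(chordTriangulations a b) = catalan #(Ioo a b) := by
  induction hk : #(Ioo a b) using Nat.strong_induction_on generalizing a b with
  | _ k ih =>
  obtain _ | k := k
  · have hcov : a ⋖ b := ⟨hab, fun c hac hcb ↦ by
      simpa [card_eq_zero.1 hk] using mem_Ioo.2 ⟨hac, hcb⟩⟩
    rw [chordTriangulations_of_covBy hcov, card_singleton, catalan_zero]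
  have hunion : chordTriangulations a b = (Ioo a b).biUnion fun m ↦
      {t ∈ chordTriangulations a b | (a, m) ∈ t ∧ (m, b) ∈ t} := by
    obtain ⟨c, hc⟩ := card_pos.1 (k.succ_pos.trans_eq hk.symm)
    obtain ⟨hac, hcb⟩ := mem_Ioo.1 hc
    ext t
    simp only [mem_biUnion, mem_filter, mem_chordTriangulations]
    refine ⟨fun ht ↦ ?_, fun ⟨_, _, ht, _⟩ ↦ ht⟩
    obtain ⟨m, ham, hmb⟩ := ht.exists_apex hac hcb
    exact ⟨m, mem_Ioo.2 ⟨(ht.isChordIn _ ham).2.1, (ht.isChordIn _ hmb).2.1⟩, ht, ham, hmb⟩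
  have hdisj : (Ioo a b : Set α).PairwiseDisjoint
      fun m ↦ {t ∈ chordTriangulations a b | (a, m) ∈ t ∧ (m, b) ∈ t} := by
    refine fun m _ m' _ hne ↦ disjoint_filter.2 fun t ht h h' ↦ hne ?_
    exact (mem_chordTriangulations.1 ht).apex_unique h.1 h.2 h'.1 h'.2
  calc #(chordTriangulations a b)
      = ∑ m ∈ Ioo a b, #{t ∈ chordTriangulations a b | (a, m) ∈ t ∧ (m, b) ∈ t} := by
        rw [← card_biUnion hdisj, ← hunion]
    _ = ∑ m ∈ Ioo a b, catalan #(Ioo a m) * catalan #(Ioo m b) := by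
        refine sum_congr rfl fun m hm ↦ ?_
        obtain ⟨ham, hmb⟩ := mem_Ioo.1 hm
        have := card_Ioo_add_card_Ioo_add_one ham hmb
        rw [card_chordTriangulations_apex ham hmb, ih _ (by omega) ham rfl, ih _ (by omega) hmb rfl]
    _ = ∑ ij ∈ antidiagonal k, catalan ij.1 * catalan ij.2 :=
        sum_Ioo_eq_sum_antidiagonal hk fun i j ↦ catalan i * catalan j
    _ = catalan (k + 1) := (catalan_succ' k).symm

end Catalan

end Chords

lemma exists_lt_sym2Mk_eq {α : Type*} [LinearOrder α] {e : Sym2 α} (he : ¬ e.IsDiag) :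
    ∃ i j, i < j ∧ s(i, j) = e := by
  induction e with
  | _ a b =>
  obtain hlt | hlt := lt_or_gt_of_ne fun h : a = b ↦ he h
  exacts [⟨a, b, hlt, rfl⟩, ⟨b, a, hlt, Sym2.eq_swap⟩]

lemma injOn_sym2Mk {α : Type*} [LinearOrder α] :
    {e : α × α | e.1 < e.2}.InjOn fun e ↦ s(e.1, e.2) := by
  rintro ⟨i, j⟩ hij ⟨k, l⟩ hkl heq
  grind [Sym2.eq_iff]

section Polygon

variable {k : ℕ} {i j x y : Fin k}

lemma fin_val_sub (i j : Fin k) :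
    (i - j).val = if j ≤ i then i.val - j.val else k + i.val - j.val := by
  split_ifs with h
  exacts [Fin.sub_val_of_le h, Fin.coe_sub_iff_lt.2 (not_le.1 h)]

lemma cycBtw_iff_of_lt (hij : i < j) : CycBtw i j x ↔ i < x ∧ x < j := by
  simp only [CycBtw, fin_val_sub]
  grind

lemma cycBtw_iff_of_gt (hij : i < j) : CycBtw j i x ↔ x < i ∨ j < x := by
  simp only [CycBtw, fin_val_sub]
  grind

lemma polyAdj_comm : PolyAdj i j ↔ PolyAdj j i := or_comm

lemma polyAdj_iff_of_lt (hij : i < j) :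
    PolyAdj i j ↔ j.val = i.val + 1 ∨ (i.val = 0 ∧ j.val + 1 = k) := by
  simp only [PolyAdj, fin_val_sub]
  grind

lemma isSide_mk : IsSide s(i, j) ↔ PolyAdj i j := by
  refine ⟨?_, fun h ↦ ⟨i, j, rfl, h⟩⟩
  rintro ⟨a, b, heq, h⟩
  obtain ⟨rfl, rfl⟩ | ⟨rfl, rfl⟩ := Sym2.eq_iff.1 heq
  exacts [h, polyAdj_comm.1 h]

lemma isDiagonal_iff {e : Sym2 (Fin k)} : IsDiagonal e ↔ ¬ e.IsDiag ∧ ¬ IsSide e := by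
  simp only [IsDiagonal, IsSide, not_exists, not_and]

lemma crosses_mk_iff {a b c d : Fin k} : Crosses s(a, b) s(c, d) ↔
    Xor (CycBtw a b c) (CycBtw a b d) ∧ Xor (CycBtw b a c) (CycBtw b a d) := by
  have hcd (a b : Fin k) :
      (∃ x y, s(c, d) = s(x, y) ∧ Xor (CycBtw a b x) (CycBtw a b y)) ↔
        Xor (CycBtw a b c) (CycBtw a b d) := by
    refine ⟨?_, fun h ↦ ⟨c, d, rfl, h⟩⟩
    rintro ⟨x, y, heq, h⟩
    obtain ⟨rfl, rfl⟩ | ⟨rfl, rfl⟩ := Sym2.eq_iff.1 heq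
    exacts [h, h.symm]
  refine ⟨fun h ↦ ⟨(hcd a b).1 (h a b rfl), (hcd b a).1 (h b a Sym2.eq_swap)⟩, ?_⟩
  rintro ⟨hab, hba⟩ x y heq
  obtain ⟨rfl, rfl⟩ | ⟨rfl, rfl⟩ := Sym2.eq_iff.1 heq
  exacts [(hcd _ _).2 hab, (hcd _ _).2 hba]

lemma crosses_iff_chordsCross {e f : Fin k × Fin k} (he : e.1 < e.2) (hf : f.1 < f.2) :
    Crosses s(e.1, e.2) s(f.1, f.2) ↔ ChordsCross e f := by
  rw [crosses_mk_iff]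
  simp only [cycBtw_iff_of_lt he, cycBtw_iff_of_gt he, xor_def, ChordsCross]
  grind

lemma not_chordsCross_of_isSide {e f : Fin k × Fin k} (he : e.1 < e.2)
    (hside : IsSide s(e.1, e.2)) : ¬ ChordsCross e f := by
  rw [isSide_mk, polyAdj_iff_of_lt he] at hside
  grind [ChordsCross]

open Classical in
/-- The diagonals of the polygon, as unordered pairs, among the chords encoded by the pairs in
`τ`. -/
noncomputable def diagonalsOf (τ : Finset (Fin k × Fin k)) : Finset (Sym2 (Fin k)) :=
  {e ∈ τ.image fun e ↦ s(e.1, e.2) | ¬ IsSide e}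

lemma mem_diagonalsOf {τ : Finset (Fin k × Fin k)} {e : Sym2 (Fin k)} :
    e ∈ diagonalsOf τ ↔ (∃ c ∈ τ, s(c.1, c.2) = e) ∧ ¬ IsSide e := by
  simp only [diagonalsOf, mem_filter, mem_image]

lemma mk_mem_diagonalsOf {τ : Finset (Fin k × Fin k)} (hτ : ∀ e ∈ τ, e.1 < e.2)
    {e : Fin k × Fin k} (he : e.1 < e.2) :
    s(e.1, e.2) ∈ diagonalsOf τ ↔ e ∈ τ ∧ ¬ IsSide s(e.1, e.2) := by
  rw [mem_diagonalsOf, and_congr_left_iff]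
  refine fun _ ↦ ⟨?_, fun h ↦ ⟨e, h, rfl⟩⟩
  rintro ⟨c, hc, heq⟩
  exact injOn_sym2Mk (hτ c hc) he heq ▸ hc

lemma isChordIn_zero_last {n : ℕ} {e : Fin (n + 1) × Fin (n + 1)} :
    IsChordIn 0 (Fin.last n) e ↔ e.1 < e.2 :=
  ⟨fun h ↦ h.2.1, fun h ↦ ⟨Fin.zero_le _, h, Fin.le_last _⟩⟩

lemma isTriangulation_diagonalsOf {n : ℕ} {τ : Finset (Fin (n + 2) × Fin (n + 2))}
    (hτ : IsChordTriangulation 0 (Fin.last (n + 1)) τ) : IsTriangulation n (diagonalsOf τ) := by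
  have hlt (e) (he : e ∈ τ) : e.1 < e.2 := (hτ.isChordIn e he).2.1
  refine ⟨fun e he ↦ ?_, fun e he f hf ↦ ?_, fun e he hcross ↦ ?_⟩
  · obtain ⟨⟨c, hc, rfl⟩, hside⟩ := mem_diagonalsOf.1 he
    exact isDiagonal_iff.2 ⟨(hlt c hc).ne, hside⟩
  · obtain ⟨⟨c, hc, rfl⟩, -⟩ := mem_diagonalsOf.1 he
    obtain ⟨⟨d, hd, rfl⟩, -⟩ := mem_diagonalsOf.1 hf
    rw [crosses_iff_chordsCross (hlt c hc) (hlt d hd)]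
    exact hτ.not_chordsCross c hc d hd
  · obtain ⟨hdiag, hside⟩ := isDiagonal_iff.1 he
    obtain ⟨i, j, hij, rfl⟩ := exists_lt_sym2Mk_eq hdiag
    refine (mk_mem_diagonalsOf hlt (e := (i, j)) hij).2 ⟨?_, hside⟩
    refine hτ.mem_of_not_chordsCross _ (isChordIn_zero_last.2 hij) fun f hf hij_f ↦ ?_
    have hside_f : ¬ IsSide s(f.1, f.2) := fun h ↦
      not_chordsCross_of_isSide (hlt f hf) h (chordsCross_comm.1 hij_f)
    exact hcross _ ((mk_mem_diagonalsOf hlt (hlt f hf)).2 ⟨hf, hside_f⟩)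
      ((crosses_iff_chordsCross (e := (i, j)) hij (hlt f hf)).2 hij_f)

end Polygon

namespace Triangulation

variable {n : ℕ} {s t : Triangulation n} {e : Fin (n + 2) × Fin (n + 2)}

open Classical in
/-- The sides of the polygon and the diagonals of `t`, encoded as increasing pairs. -/
noncomputable def chords (t : Triangulation n) : Finset (Fin (n + 2) × Fin (n + 2)) :=
  {e | e.1 < e.2 ∧ EdgeOfT t s(e.1, e.2)}

lemma mem_chords : e ∈ t.chords ↔ e.1 < e.2 ∧ EdgeOfT t s(e.1, e.2) := by
  simp only [chords, mem_filter_univ]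

lemma lt_of_mem_chords (he : e ∈ t.chords) : e.1 < e.2 := (mem_chords.1 he).1

lemma mk_mem_val_iff (he : e.1 < e.2) :
    s(e.1, e.2) ∈ t.val ↔ e ∈ t.chords ∧ ¬ IsSide s(e.1, e.2) := by
  refine ⟨fun h ↦ ⟨mem_chords.2 ⟨he, .inr h⟩, (isDiagonal_iff.1 (t.2.1 _ h)).2⟩, ?_⟩
  exact fun h ↦ (mem_chords.1 h.1).2.resolve_left h.2

lemma isChordTriangulation_chords (t : Triangulation n) :
    IsChordTriangulation 0 (Fin.last (n + 1)) t.chords where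
  isChordIn e he := isChordIn_zero_last.2 (lt_of_mem_chords he)
  not_chordsCross e he f hf := by
    obtain ⟨hlt_e, hside_e | het⟩ := mem_chords.1 he
    · exact not_chordsCross_of_isSide hlt_e hside_e
    obtain ⟨hlt_f, hside_f | hft⟩ := mem_chords.1 hf
    · exact fun h ↦ not_chordsCross_of_isSide hlt_f hside_f (chordsCross_comm.1 h)
    · exact fun h ↦ t.2.2.1 _ het _ hft ((crosses_iff_chordsCross hlt_e hlt_f).2 h)
  mem_of_not_chordsCross e he hcross := by
    have hlt := isChordIn_zero_last.1 he
    refine mem_chords.2 ⟨hlt, or_iff_not_imp_left.2 fun hside ↦ ?_⟩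
    refine t.2.2.2 _ (isDiagonal_iff.2 ⟨hlt.ne, hside⟩) fun f hf ↦ ?_
    obtain ⟨i, j, hij, rfl⟩ := exists_lt_sym2Mk_eq (t.2.1 f hf).1
    rw [crosses_iff_chordsCross (f := (i, j)) hlt hij]
    exact hcross _ (mem_chords.2 ⟨hij, .inr hf⟩)

lemma chords_injective : Function.Injective (chords (n := n)) := by
  have hsub {s t : Triangulation n} (h : s.chords = t.chords) : s.val ⊆ t.val := by
    intro e he
    obtain ⟨i, j, hij, rfl⟩ := exists_lt_sym2Mk_eq (s.2.1 e he).1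
    rwa [mk_mem_val_iff (e := (i, j)) hij, ← h, ← mk_mem_val_iff hij]
  exact fun s t h ↦ Subtype.ext ((hsub h).antisymm (hsub h.symm))

lemma exists_chords_eq {τ : Finset (Fin (n + 2) × Fin (n + 2))}
    (hτ : IsChordTriangulation 0 (Fin.last (n + 1)) τ) : ∃ t : Triangulation n, t.chords = τ := by
  let t : Triangulation n := ⟨diagonalsOf τ, isTriangulation_diagonalsOf hτ⟩
  have hlt (e) (he : e ∈ τ) : e.1 < e.2 := (hτ.isChordIn e he).2.1
  refine ⟨t, ext fun e ↦ mem_chords.trans ⟨?_, ?_⟩⟩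
  · rintro ⟨he, hside | hdiag⟩
    · exact hτ.mem_of_not_chordsCross e (isChordIn_zero_last.2 he) fun f _ ↦
        not_chordsCross_of_isSide he hside
    · exact ((mk_mem_diagonalsOf hlt he).1 hdiag).1
  · exact fun he ↦ ⟨hlt e he, or_iff_not_imp_left.2 fun hside ↦
      (mk_mem_diagonalsOf hlt (hlt e he)).2 ⟨he, hside⟩⟩

lemma image_chords_sdiff_chords (s t : Triangulation n) :
    (s.chords \ t.chords).image (fun e ↦ s(e.1, e.2)) = s.val \ t.val := by
  ext e
  simp only [mem_image, mem_sdiff]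
  constructor
  · rintro ⟨e, ⟨hes, het⟩, rfl⟩
    have hlt := lt_of_mem_chords hes
    have hside : ¬ IsSide s(e.1, e.2) := fun h ↦ het (mem_chords.2 ⟨hlt, .inl h⟩)
    exact ⟨(mk_mem_val_iff hlt).2 ⟨hes, hside⟩, fun h ↦ het ((mk_mem_val_iff hlt).1 h).1⟩
  · rintro ⟨hes, het⟩
    obtain ⟨i, j, hij, rfl⟩ := exists_lt_sym2Mk_eq (s.2.1 e hes).1
    rw [mk_mem_val_iff (e := (i, j)) hij] at hes het
    exact ⟨(i, j), ⟨hes.1, fun h ↦ het ⟨h, hes.2⟩⟩, rfl⟩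

lemma card_chords_sdiff_chords (s t : Triangulation n) :
    #(s.chords \ t.chords) = #(s.val \ t.val) := by
  rw [← image_chords_sdiff_chords, card_image_of_injOn]
  exact injOn_sym2Mk.mono fun e he ↦ lt_of_mem_chords (mem_sdiff.1 he).1

lemma mem_orientedClass_iff {p : Fin (n + 2)} (hp : 0 < p) (hp' : p < Fin.last (n + 1)) :
    t ∈ orientedClass n p ↔ (0, p) ∈ t.chords ∧ (p, Fin.last (n + 1)) ∈ t.chords := by
  have hbase := t.isChordTriangulation_chords.base_mem (hp.trans hp')
  simp only [mem_chords] at hbase ⊢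
  simp only [orientedClass, IsTriangleOf, Set.mem_ofPred_eq, Fin.cast_val_eq_self,
    Fin.natCast_eq_last]
  simp only [ne_eq, hp, hp.ne, hp', hp'.ne, hbase, hbase.1.ne, not_false_eq_true, true_and,
    and_true]

end Triangulation

lemma card_sdiff_eq_one_iff_eq_insert_erase {α : Type*} [DecidableEq α] {s t : Finset α} {x y : α}
    (hxs : x ∈ s) (hxt : x ∉ t) (hyt : y ∈ t) (hys : y ∉ s) :
    (#(s \ t) = 1 ∧ #(t \ s) = 1) ↔ t = insert y (s.erase x) := by
  constructor
  · rintro ⟨hst, hts⟩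
    have hx (z) (hzs : z ∈ s) (hzt : z ∉ t) : z = x :=
      card_le_one.1 hst.le z (mem_sdiff.2 ⟨hzs, hzt⟩) x (mem_sdiff.2 ⟨hxs, hxt⟩)
    have hy (z) (hzt : z ∈ t) (hzs : z ∉ s) : z = y :=
      card_le_one.1 hts.le z (mem_sdiff.2 ⟨hzt, hzs⟩) y (mem_sdiff.2 ⟨hyt, hys⟩)
    ext z
    grind
  · rintro rfl
    have hx : s \ insert y (s.erase x) = {x} := by grind
    have hy : insert y (s.erase x) \ s = {y} := by grind
    exact ⟨by rw [hx, card_singleton], by rw [hy, card_singleton]⟩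

section Edges

variable {V : Type*} {G : SimpleGraph V} {S T : Set V}

/-- The set of edges of `G` with one endpoint in `S` and the other in `T`. -/
def edgesAcross (G : SimpleGraph V) (S T : Set V) : Set (Sym2 V) :=
  {e | e ∈ G.edgeSet ∧ ∃ u v : V, e = s(u, v) ∧ u ∈ S ∧ v ∈ T}

lemma eq_of_mem_edgesAcross (hdisj : Disjoint S T)
    (hS : ∀ u ∈ S, ∀ v ∈ T, ∀ w ∈ T, G.Adj u v → G.Adj u w → v = w)
    (hT : ∀ v ∈ T, ∀ u ∈ S, ∀ w ∈ S, G.Adj v u → G.Adj v w → u = w)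
    {e f : Sym2 V} (he : e ∈ edgesAcross G S T) (hf : f ∈ edgesAcross G S T)
    {x : V} (hxe : x ∈ e) (hxf : x ∈ f) : e = f := by
  obtain ⟨hadj, u, v, rfl, hu, hv⟩ := he
  obtain ⟨hadj', u', v', rfl, hu', hv'⟩ := hf
  rw [SimpleGraph.mem_edgeSet] at hadj hadj'
  obtain rfl | rfl := Sym2.mem_iff.1 hxe <;> obtain rfl | rfl := Sym2.mem_iff.1 hxf
  · rw [hS x hu v hv v' hv' hadj hadj']
  · exact (hdisj.ne_of_mem hu hv' rfl).elim
  · exact (hdisj.ne_of_mem hu' hv rfl).elim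
  · rw [hT x hv u hu u' hu' hadj.symm hadj'.symm]

lemma ncard_edgesAcross (hdisj : Disjoint S T)
    (hS : ∀ u ∈ S, ∀ v ∈ T, ∀ w ∈ T, G.Adj u v → G.Adj u w → v = w) :
    (edgesAcross G S T).ncard = {u | u ∈ S ∧ ∃ v ∈ T, G.Adj u v}.ncard := by
  refine (Set.ncard_congr (fun u hu ↦ s(u, hu.2.choose)) (fun u hu ↦ ?_)
    (fun u w hu hw heq ↦ ?_) fun e he ↦ ?_).symm
  · obtain ⟨hv, hadj⟩ := hu.2.choose_spec
    exact ⟨hadj, _, _, rfl, hu.1, hv⟩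
  · obtain ⟨h, -⟩ | ⟨h, -⟩ := Sym2.eq_iff.1 heq
    · exact h
    · exact (hdisj.ne_of_mem hu.1 hw.2.choose_spec.1 h).elim
  · obtain ⟨hadj, u, v, rfl, hu, hv⟩ := he
    have hex : ∃ v ∈ T, G.Adj u v := ⟨v, hv, hadj⟩
    obtain ⟨hv', hadj'⟩ := hex.choose_spec
    exact ⟨u, ⟨hu, hex⟩, by rw [hS u hu _ hv' v hv hadj' hadj]⟩

end Edges

section OrientedClass

open Triangulation

variable {n : ℕ} {p q : Fin (n + 2)} {u v w : Triangulation n}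

lemma assocGraph_adj_iff_chords_eq {e f : Fin (n + 2) × Fin (n + 2)} (heu : e ∈ u.chords)
    (hev : e ∉ v.chords) (hfv : f ∈ v.chords) (hfu : f ∉ u.chords) :
    (assocGraph n).Adj u v ↔ v.chords = insert f (u.chords.erase e) := by
  rw [← card_sdiff_eq_one_iff_eq_insert_erase heu hev hfv hfu, card_chords_sdiff_chords,
    card_chords_sdiff_chords]
  exact Iff.rfl

lemma notMem_chords_of_mem_orientedClass (hp : 0 < p) (hpq : p < q) (hq : q < Fin.last (n + 1))
    (hu : u ∈ orientedClass n p) (hv : v ∈ orientedClass n q) :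
    (p, Fin.last (n + 1)) ∉ v.chords ∧ (0, q) ∉ u.chords := by
  rw [mem_orientedClass_iff hp (hpq.trans hq)] at hu
  rw [mem_orientedClass_iff (hp.trans hpq) hq] at hv
  have hcross : ChordsCross (0, q) (p, Fin.last (n + 1)) := .inl ⟨hp, hpq, hq⟩
  exact ⟨fun h ↦ v.isChordTriangulation_chords.not_chordsCross _ hv.1 _ h hcross,
    fun h ↦ u.isChordTriangulation_chords.not_chordsCross _ h _ hu.2 hcross⟩

lemma disjoint_orientedClass (hp : 0 < p) (hpq : p < q) (hq : q < Fin.last (n + 1)) :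
    Disjoint (orientedClass n p) (orientedClass n q) := by
  refine Set.disjoint_left.2 fun t ht ht' ↦
    (notMem_chords_of_mem_orientedClass hp hpq hq ht ht').1 ?_
  exact ((mem_orientedClass_iff hp (hpq.trans hq)).1 ht).2

lemma assocGraph_adj_iff_chords_eq_right (hp : 0 < p) (hpq : p < q) (hq : q < Fin.last (n + 1))
    (hu : u ∈ orientedClass n p) (hv : v ∈ orientedClass n q) :
    (assocGraph n).Adj u v ↔
      v.chords = insert (0, q) (u.chords.erase (p, Fin.last (n + 1))) := by
  obtain ⟨hpv, hqu⟩ := notMem_chords_of_mem_orientedClass hp hpq hq hu hv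
  exact assocGraph_adj_iff_chords_eq ((mem_orientedClass_iff hp (hpq.trans hq)).1 hu).2 hpv
    ((mem_orientedClass_iff (hp.trans hpq) hq).1 hv).1 hqu

lemma assocGraph_adj_iff_chords_eq_left (hp : 0 < p) (hpq : p < q) (hq : q < Fin.last (n + 1))
    (hu : u ∈ orientedClass n p) (hv : v ∈ orientedClass n q) :
    (assocGraph n).Adj v u ↔
      u.chords = insert (p, Fin.last (n + 1)) (v.chords.erase (0, q)) := by
  obtain ⟨hpv, hqu⟩ := notMem_chords_of_mem_orientedClass hp hpq hq hu hv
  exact assocGraph_adj_iff_chords_eq ((mem_orientedClass_iff (hp.trans hpq) hq).1 hv).1 hqu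
    ((mem_orientedClass_iff hp (hpq.trans hq)).1 hu).2 hpv

lemma eq_of_adj_of_mem_orientedClass_right (hp : 0 < p) (hpq : p < q)
    (hq : q < Fin.last (n + 1)) (hu : u ∈ orientedClass n p) (hv : v ∈ orientedClass n q)
    (hw : w ∈ orientedClass n q) (huv : (assocGraph n).Adj u v) (huw : (assocGraph n).Adj u w) :
    v = w := by
  have hv_chords := (assocGraph_adj_iff_chords_eq_right hp hpq hq hu hv).1 huv
  have hw_chords := (assocGraph_adj_iff_chords_eq_right hp hpq hq hu hw).1 huw
  exact chords_injective (hv_chords.trans hw_chords.symm)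

lemma eq_of_adj_of_mem_orientedClass_left (hp : 0 < p) (hpq : p < q)
    (hq : q < Fin.last (n + 1)) (hv : v ∈ orientedClass n q) (hu : u ∈ orientedClass n p)
    (hw : w ∈ orientedClass n p) (hvu : (assocGraph n).Adj v u) (hvw : (assocGraph n).Adj v w) :
    u = w := by
  have hu_chords := (assocGraph_adj_iff_chords_eq_left hp hpq hq hu hv).1 hvu
  have hw_chords := (assocGraph_adj_iff_chords_eq_left hp hpq hq hw hv).1 hvw
  exact chords_injective (hu_chords.trans hw_chords.symm)

lemma mem_boundarySet_iff (hp : 0 < p) (hpq : p < q) (hq : q < Fin.last (n + 1)) :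
    u ∈ boundarySet n p q ↔
      ((0, p) ∈ u.chords ∧ (p, Fin.last (n + 1)) ∈ u.chords) ∧
        (p, q) ∈ u.chords ∧ (q, Fin.last (n + 1)) ∈ u.chords := by
  rw [← mem_orientedClass_iff hp (hpq.trans hq)]
  refine and_congr_right fun hu ↦ ?_
  obtain ⟨hap, hpb⟩ := (mem_orientedClass_iff hp (hpq.trans hq)).1 hu
  rw [← u.isChordTriangulation_chords.insert_erase_iff hap hpb hpq hq]
  constructor
  · rintro ⟨v, hv, hadj⟩
    rw [← (assocGraph_adj_iff_chords_eq_right hp hpq hq hu hv).1 hadj]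
    exact v.isChordTriangulation_chords
  · intro hflip
    obtain ⟨v, hv⟩ := exists_chords_eq hflip
    have hqb := ((u.isChordTriangulation_chords.insert_erase_iff hap hpb hpq hq).1 hflip).2
    have hvq : v ∈ orientedClass n q := by
      rw [mem_orientedClass_iff (hp.trans hpq) hq, hv]
      exact ⟨mem_insert_self _ _, mem_insert_of_mem (mem_erase.2
        ⟨fun h ↦ hpq.ne' (congrArg Prod.fst h), hqb⟩)⟩
    exact ⟨v, hvq, (assocGraph_adj_iff_chords_eq_right hp hpq hq hu hvq).2 hv⟩

lemma ncard_boundarySet (hp : 0 < p) (hpq : p < q) (hq : q < Fin.last (n + 1)) :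
    (boundarySet n p q).ncard =
      catalan (p.val - 1) * catalan (q.val - p.val - 1) * catalan (n - q.val) := by
  have himage : chords '' boundarySet n p q =
      {t ∈ chordTriangulations 0 (Fin.last (n + 1)) |
        ((0, p) ∈ t ∧ (p, Fin.last (n + 1)) ∈ t) ∧
          (p, q) ∈ t ∧ (q, Fin.last (n + 1)) ∈ t} := by
    ext τ
    simp only [Set.mem_image, mem_boundarySet_iff hp hpq hq, coe_filter, Set.mem_ofPred_eq,
      mem_chordTriangulations]
    constructor
    · rintro ⟨u, hu, rfl⟩
      exact ⟨u.isChordTriangulation_chords, hu⟩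
    · rintro ⟨hτ, hmem⟩
      obtain ⟨u, rfl⟩ := exists_chords_eq hτ
      exact ⟨u, hmem, rfl⟩
  have hlast : n + 1 - q.val - 1 = n - q.val := by omega
  rw [← Set.ncard_image_of_injective _ chords_injective, himage, Set.ncard_coe_finset,
    card_chordTriangulations_two_apexes hp hpq hq, card_chordTriangulations hp,
    card_chordTriangulations hpq, card_chordTriangulations hq, Fin.card_Ioo, Fin.card_Ioo,
    Fin.card_Ioo, Fin.val_zero, Nat.sub_zero, Fin.val_last, hlast]

end OrientedClass

lemma catalan_pos (n : ℕ) : 0 < catalan n := by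
  rw [catalan_eq_centralBinom_div]
  exact Nat.div_pos (Nat.le_of_dvd n.centralBinom_pos n.succ_dvd_centralBinom) n.succ_pos

/-- for every `n ≥ 2` and `1 ≤ p < q ≤ n`, the set `E_{p,q}` of edges of
`K_n` between the oriented classes `Θ_{T_p}` and `Θ_{T_q}` is a nonempty matching, and
its cardinality equals `C_{p-1}·C_{q-p-1}·C_{n-q}`, the number of vertices of
`K_{p-1} □ K_{q-p-1} □ K_{n-q}`. -/
theorem edgesBetween_matching_card (n p q : ℕ) (hn : 2 ≤ n) (hp : 1 ≤ p)
    (hpq : p < q) (hqn : q ≤ n) :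
    (edgesBetween n p q).Nonempty ∧
    (∀ e ∈ edgesBetween n p q, ∀ f ∈ edgesBetween n p q,
      ∀ x : Triangulation n, x ∈ e → x ∈ f → e = f) ∧
    (edgesBetween n p q).ncard = catalan (p - 1) * catalan (q - p - 1) * catalan (n - q) := by
  lift p to Fin (n + 2) using by omega
  lift q to Fin (n + 2) using by omega
  have hp : 0 < p := Fin.lt_def.2 hp
  have hpq : p < q := Fin.lt_def.2 hpq
  have hq : q < Fin.last (n + 1) := Fin.lt_def.2 (Nat.lt_succ_of_le hqn)
  have hdisj := disjoint_orientedClass hp hpq hq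
  have huniq_p : ∀ u ∈ orientedClass n p, ∀ v ∈ orientedClass n q, ∀ w ∈ orientedClass n q,
      (assocGraph n).Adj u v → (assocGraph n).Adj u w → v = w :=
    fun _ hu _ hv _ hw ↦ eq_of_adj_of_mem_orientedClass_right hp hpq hq hu hv hw
  have huniq_q : ∀ v ∈ orientedClass n q, ∀ u ∈ orientedClass n p, ∀ w ∈ orientedClass n p,
      (assocGraph n).Adj v u → (assocGraph n).Adj v w → u = w :=
    fun _ hv _ hu _ hw ↦ eq_of_adj_of_mem_orientedClass_left hp hpq hq hv hu hw
  have hcard := (ncard_edgesAcross hdisj huniq_p).trans (ncard_boundarySet hp hpq hq)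
  have hpos : 0 < catalan (p.val - 1) * catalan (q.val - p.val - 1) * catalan (n - q.val) :=
    mul_pos (mul_pos (catalan_pos _) (catalan_pos _)) (catalan_pos _)
  exact ⟨Set.nonempty_of_ncard_ne_zero (hcard ▸ hpos.ne'),
    fun e he f hf x ↦ eq_of_mem_edgesAcross hdisj huniq_p huniq_q he hf, hcard⟩
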